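/- Every nonzero homogeneous element of B of odd degree δ and weight w satisfies p·δ ≥ (p−1)·w + p·(2p^n − 1); equivalently, the lowest odd degree occurring in the weight-w component of B is at least ((p−1)/p)·w + 2p^n − 1 (this minimum is realized by ξ_1^{w/2p − p^n}·τ_{n+1} when w is divisible by 2p and w/2p ≥ p^n). -/

import Mathlib

/-!
The excess `p · deg - (p - 1) · wt` is additive on monomials. It equals `2p^j - 2p ≥ 0` on `ξ_j`
(`j ≥ 1`), and `2p^k - p ≥ p(2p^n - 1)` on `τ_k` (`k ≥ n + 1`), so a monomial with `r` exterior
factors has excess at least `r · p(2p^n - 1)` (`excess_monomial`). All `ξ_j` have even degree, so a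
monomial of odd degree has `r ≥ 1` (`nonempty_of_odd_monDeg`). A nonzero element has a monomial in
its support, and that monomial carries the degree and weight of the element.
-/

/-!
Setup following Angeltveit–Lind, "Uniqueness of `BP⟨n⟩`".

`B` is the `𝔽_p`-algebra `𝔽_p[ξ_1, ξ_2, …] ⊗ Λ(τ_{n+1}, τ_{n+2}, …)`
(the mod `p` homology of `BP⟨n⟩`), presented by its monomial basis.
A monomial is encoded as a pair `(e, S) : (ℕ →₀ ℕ) × Finset ℕ`, standing for
`∏_j ξ_{j+1} ^ (e j) · ∏_{k ∈ S} τ_{n+1+k}`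
(the index shift makes every `e : ℕ →₀ ℕ` and every `S : Finset ℕ` legal:
`ξ`-indices are `≥ 1` and `τ`-indices are `≥ n+1`).
-/

/-- Monomials of `B = 𝔽_p[ξ_1, ξ_2, …] ⊗ Λ(τ_{n+1}, …)`:
`(e, S)` encodes `∏_j ξ_{j+1}^(e j) · ∏_{k ∈ S} τ_{n+1+k}`. -/
abbrev Mon : Type := (ℕ →₀ ℕ) × Finset ℕ

/-- Degree of a monomial: `deg ξ_j = 2p^j - 2`, `deg τ_k = 2p^k - 1`. -/
def monDeg (p n : ℕ) (m : Mon) : ℕ :=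
  m.1.sum (fun j e => e * (2 * p ^ (j + 1) - 2)) + ∑ k ∈ m.2, (2 * p ^ (n + 1 + k) - 1)

/-- Weight of a monomial: `wt ξ_j = 2p^j`, `wt τ_k = 2p^k`. -/
def monWt (p n : ℕ) (m : Mon) : ℕ :=
  m.1.sum (fun j e => e * (2 * p ^ (j + 1))) + ∑ k ∈ m.2, 2 * p ^ (n + 1 + k)

/-- `B`, the mod `p` homology of `BP⟨n⟩`, as the free `𝔽_p`-vector space on
its monomial basis.  The same underlying space also serves as a model for the
graded dual `B'` (the mod `p` cohomology of `BP⟨n⟩`), an element `f` of `B'`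
being recorded by its coefficients `f m` in the dual monomial basis; since each
degree component of `B` is finite dimensional, spanned by the finitely many
monomials of that degree, finitely supported coefficient functions on the
monomial basis correspond exactly to elements of `⊕_δ (B_δ)^*`. -/
abbrev B (p : ℕ) : Type := Mon →₀ ZMod p

/-- `x ∈ B` is homogeneous of degree `δ` (for an element of the graded dual
`B'` this means homogeneous of degree `-δ`, since `(B_δ)^*` sits in
degree `-δ`). -/
def IsHomog (p n : ℕ) (x : B p) (δ : ℕ) : Prop := ∀ m ∈ x.support, monDeg p n m = δ

/-- `x ∈ B` is homogeneous of weight `w`. -/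
def IsWeight (p n : ℕ) (x : B p) (w : ℕ) : Prop := ∀ m ∈ x.support, monWt p n m = w

/-- Value of `D_i` on the basis monomial `(e, S)`:
`Σ_{a=1}^{r} (−1)^(a−1) ξ^e · ξ_{k_a−i}^(p^i) · τ_{k_1} ⋯ τ̂_{k_a} ⋯ τ_{k_r}`,
where `S = {k_1 < … < k_r}`.  In the encoding, removing `τ_{n+1+k}` (i.e.
`k ∈ S`) adds `p^i` to the exponent of `ξ_{(n+1+k)−i}`, whose `ξ`-index is
`n+k−i`, and the sign `(−1)^(a-1)` is `(−1)^#{k' ∈ S | k' < k}`. -/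
noncomputable def Dmon (p n i : ℕ) (m : Mon) : B p :=
  ∑ k ∈ m.2, ((-1 : ZMod p) ^ ((m.2.filter (fun k' => k' < k)).card)) •
    Finsupp.single (m.1 + Finsupp.single (n + k - i) (p ^ i), m.2.erase k) (1 : ZMod p)

/-- The `𝔽_p`-linear map `D_i : B → B`, dual to the Milnor primitive `Q_i`. -/
noncomputable def D (p n i : ℕ) : B p →ₗ[ZMod p] B p :=
  Finsupp.linearCombination (ZMod p) (Dmon p n i)

/-- The excess of `ξ_{j+1}` is nonnegative. -/
lemma excess_xi {p : ℕ} (hp : 1 ≤ p) (j : ℕ) :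
    (p - 1) * (2 * p ^ (j + 1)) ≤ p * (2 * p ^ (j + 1) - 2) := by
  have h : p ≤ p ^ (j + 1) := Nat.le_self_pow (by omega) p
  generalize p ^ (j + 1) = q at h
  obtain ⟨a, rfl⟩ := Nat.exists_eq_add_of_le' hp
  obtain ⟨b, rfl⟩ := Nat.exists_eq_add_of_le h
  have h2 : 2 * (a + 1 + b) - 2 = 2 * (a + b) := by omega
  rw [h2, Nat.add_sub_cancel]
  nlinarith

/-- The excess of `τ_{n+1+k}` is at least that of `τ_{n+1}`, which is `p(2p^n - 1)`. -/
lemma excess_tau {p : ℕ} (hp : 1 ≤ p) (n k : ℕ) :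
    (p - 1) * (2 * p ^ (n + 1 + k)) + p * (2 * p ^ n - 1) ≤ p * (2 * p ^ (n + 1 + k) - 1) := by
  have h : p * p ^ n ≤ p ^ (n + 1 + k) := by
    rw [← pow_succ']
    exact Nat.pow_le_pow_right hp (by omega)
  have hq : 1 ≤ p ^ n := Nat.one_le_pow _ _ hp
  have hQ : 1 ≤ p ^ (n + 1 + k) := Nat.one_le_pow _ _ hp
  generalize p ^ (n + 1 + k) = Q at h hQ
  generalize p ^ n = q at h hq
  zify [hp, (by omega : 1 ≤ 2 * q), (by omega : 1 ≤ 2 * Q)] at h ⊢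
  nlinarith

lemma excess_monomial {p : ℕ} (hp : 1 ≤ p) (n : ℕ) (m : Mon) :
    (p - 1) * monWt p n m + m.2.card * (p * (2 * p ^ n - 1)) ≤ p * monDeg p n m := by
  have hxi : (p - 1) * m.1.sum (fun j e => e * (2 * p ^ (j + 1))) ≤
      p * m.1.sum (fun j e => e * (2 * p ^ (j + 1) - 2)) := by
    simp only [Finsupp.sum, Finset.mul_sum]
    refine Finset.sum_le_sum fun j _ => ?_
    rw [mul_left_comm, mul_left_comm p]
    exact Nat.mul_le_mul_left _ (excess_xi hp j)
  have htau : (p - 1) * ∑ k ∈ m.2, 2 * p ^ (n + 1 + k) + m.2.card * (p * (2 * p ^ n - 1)) ≤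
      p * ∑ k ∈ m.2, (2 * p ^ (n + 1 + k) - 1) := by
    rw [Finset.mul_sum, Finset.mul_sum, ← smul_eq_mul m.2.card, ← Finset.sum_const,
      ← Finset.sum_add_distrib]
    exact Finset.sum_le_sum fun k _ => excess_tau hp n k
  rw [monWt, monDeg, mul_add, mul_add]
  omega

lemma nonempty_of_odd_monDeg {p n : ℕ} {m : Mon} (h : Odd (monDeg p n m)) : m.2.Nonempty := by
  by_contra hS
  rw [Finset.not_nonempty_iff_eq_empty] at hS
  refine Nat.not_even_iff_odd.mpr h ?_
  rw [monDeg, hS, Finset.sum_empty, add_zero]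
  refine Finset.even_sum _ fun j _ => Even.mul_left ?_ _
  exact ⟨p ^ (j + 1) - 1, by omega⟩

/-- every nonzero homogeneous element of `B` of odd degree `δ`
and weight `w` satisfies `p·δ ≥ (p−1)·w + p·(2p^n − 1)`. -/
theorem stmt7 (p n : ℕ) [Fact p.Prime] (x : B p) (hx : x ≠ 0) (dlt w : ℕ)
    (hd : IsHomog p n x dlt) (hw : IsWeight p n x w) (hodd : Odd dlt) :
    (p - 1) * w + p * (2 * p ^ n - 1) ≤ p * dlt := by
  obtain ⟨m, hm⟩ := Finsupp.support_nonempty_iff.mpr hx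
  obtain rfl := hd m hm
  obtain rfl := hw m hm
  have hcard : 1 ≤ m.2.card := (nonempty_of_odd_monDeg hodd).card_pos
  have hp : 1 ≤ p := (Fact.out : p.Prime).one_lt.le
  exact (Nat.add_le_add_left (Nat.le_mul_of_pos_left _ hcard) _).trans (excess_monomial hp n m)
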